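/- arXiv:0903.3524 — 4 statements merged into one kernel-verified Lean document; each statement's English description precedes it below -/
import Mathlib

section
/- Let g be a polynomial in two variables x, y with real coefficients, and let a < b, c < d be real numbers. Assume: (i) for every x₀ ∈ [a,b], the univariate polynomial y ↦ g(x₀,y) is not identically zero; (ii) g(x,c) ≠ 0 and g(x,d) ≠ 0 for all x ∈ [a,b]; (iii) there is no point (x,y) ∈ (a,b) × (c,d) with g(x,y) = 0 and ∂g/∂y(x,y) = 0. Then there exist an integer k ≥ 0 and continuous functions θ₁, …, θ_k : (a,b) → (c,d) with θ₁(x) < θ₂(x) < ⋯ < θ_k(x) for all x ∈ (a,b), such that {(x,y) ∈ (a,b) × (c,d) : g(x,y) = 0} is exactly the union of the graphs of θ₁, …, θ_k; in particular, for every x ∈ (a,b) the polynomial g(x,·) has exactly k roots in (c,d), and each of them is a simple root. -/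
open MvPolynomial

open Filter Topology Set Metric

/-!
Over a base point `x₀` the zeros of `y ↦ F x₀ y` in the box are simple and lie off its horizontal
edges, so there are finitely many of them. Near each one, monotonicity in `y` and the intermediate
value theorem give exactly one zero for `x` near `x₀`, and on the rest of the compact fiber `F`
stays away from zero. Hence the number of zeros is locally constant, so constant on a connected
base, and the `i`-th zero in increasing order depends continuously on `x`.
-/

section OrderedEnumeration

variable {α : Type*} {k : ℕ} {Z : Set α}

/-- The family `r` lists the elements of `Z` in strictly increasing order. The ordered sections
`θ₁ < ⋯ < θₖ` of a delineable curve enumerate its fibers in this sense. -/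
structure IsOrderedEnumeration [Preorder α] (r : Fin k → α) (Z : Set α) : Prop where
  strictMono : StrictMono r
  range_eq : range r = Z

namespace IsOrderedEnumeration

variable [Preorder α] {r r' : Fin k → α}

theorem mem_iff (hr : IsOrderedEnumeration r Z) {y : α} : y ∈ Z ↔ ∃ i, y = r i := by
  simp only [← hr.range_eq, mem_range, eq_comm]

theorem mem (hr : IsOrderedEnumeration r Z) (i : Fin k) : r i ∈ Z :=
  hr.mem_iff.2 ⟨i, rfl⟩

theorem ncard_eq (hr : IsOrderedEnumeration r Z) : Z.ncard = k := by
  rw [← hr.range_eq, ← image_univ, ncard_image_of_injective _ hr.strictMono.injective, ncard_univ,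
    Nat.card_fin]

theorem unique (hr : IsOrderedEnumeration r Z) (hr' : IsOrderedEnumeration r' Z) : r = r' :=
  (hr.strictMono.range_inj hr'.strictMono).1 (hr.range_eq.trans hr'.range_eq.symm)

end IsOrderedEnumeration

variable [LinearOrder α]

theorem exists_isOrderedEnumeration (hZ : Z.Finite) (hk : Z.ncard = k) :
    ∃ r : Fin k → α, IsOrderedEnumeration r Z := by
  have hcard : hZ.toFinset.card = k := by rw [← ncard_eq_toFinset_card Z hZ, hk]
  exact ⟨hZ.toFinset.orderEmbOfFin hcard, (hZ.toFinset.orderEmbOfFin hcard).strictMono, by simp⟩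

theorem exists_continuousOn_isOrderedEnumeration [Nonempty α] [TopologicalSpace α] {X : Type*}
    [TopologicalSpace X] {s : Set X} (hs : IsPreconnected s) {Z : X → Set α}
    (hfin : ∀ x ∈ s, (Z x).Finite)
    (hloc : ∀ x₀ ∈ s, ∀ (k : ℕ) (r : Fin k → α), IsOrderedEnumeration r (Z x₀) → ∀ U ∈ 𝓝 r,
      ∀ᶠ x in 𝓝[s] x₀, ∃ r' ∈ U, IsOrderedEnumeration r' (Z x)) :
    ∃ (k : ℕ) (θ : X → Fin k → α),
      ContinuousOn θ s ∧ ∀ x ∈ s, IsOrderedEnumeration (θ x) (Z x) := by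
  have hcard : ContinuousOn (fun x => (Z x).ncard) s := fun x₀ hx₀ => by
    obtain ⟨r, hr⟩ := exists_isOrderedEnumeration (hfin x₀ hx₀) rfl
    refine tendsto_const_nhds.congr' ?_
    filter_upwards [hloc x₀ hx₀ _ r hr univ univ_mem] with x ⟨r', _, hr'⟩
    exact hr'.ncard_eq.symm
  obtain ⟨k, -, hk⟩ := hs.eqOn_const_of_mapsTo IsDiscrete.univ hcard
    (mapsTo_univ _ _) univ_nonempty
  have hex : ∀ x ∈ s, ∃ r : Fin k → α, IsOrderedEnumeration r (Z x) := fun x hx =>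
    exists_isOrderedEnumeration (hfin x hx) (hk hx)
  choose! θ hθ using hex
  refine ⟨k, θ, fun x₀ hx₀ => tendsto_def.2 fun U hU => ?_, hθ⟩
  filter_upwards [hloc x₀ hx₀ k _ (hθ x₀ hx₀) U hU, self_mem_nhdsWithin] with x ⟨r, hrU, hr⟩ hx
  rwa [mem_preimage, (hθ x hx).unique hr]

theorem eventually_strictMono [TopologicalSpace α] [OrderClosedTopology α] {ι : Type*} [Finite ι]
    [Preorder ι] {r : ι → α} (hr : StrictMono r) : ∀ᶠ r' in 𝓝 r, StrictMono r' :=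
  eventually_all.2 fun i => eventually_all.2 fun j => eventually_imp_distrib_left.2 fun hij =>
    (continuousAt_apply i r).eventually_lt (continuousAt_apply j r) (hr hij)

end OrderedEnumeration

section CompactFiber

variable {X Y R : Type*} [TopologicalSpace Y] [TopologicalSpace R] [T1Space R] {l : Filter X}
  {K : Set Y} {F : X → Y → R} {f : Y → R} {a : R}

theorem finite_fiber_of_eventually_ne (hK : IsCompact K) (hf : ContinuousOn f K)
    (hiso : ∀ y ∈ K, f y = a → ∀ᶠ z in 𝓝[≠] y, f z ≠ a) : {y ∈ K | f y = a}.Finite := by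
  have hcodisc : {y | f y ≠ a} ∈ codiscreteWithin K := by
    refine mem_codiscreteWithin_iff_forall_mem_nhdsNE.2 fun y hy => ?_
    by_cases hya : f y = a
    · exact mem_of_superset (hiso y hy hya) subset_union_left
    · have hne := eventually_nhdsWithin_iff.1 ((hf y hy).eventually_ne hya)
      filter_upwards [nhdsWithin_le_nhds hne] with z hz
      exact or_iff_not_imp_right.2 fun hzK => hz (not_not.1 hzK)
  exact (hK.finite_sdiff_of_mem_codiscreteWithin hcodisc).subset fun y hy => ⟨hy.1, not_not.2 hy.2⟩

theorem eventually_forall_ne_of_isCompact (hK : IsCompact K)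
    (hF : ∀ y ∈ K, Tendsto ↿F (l ×ˢ 𝓝[K] y) (𝓝 (f y)))
    (hf : ∀ y ∈ K, f y ≠ a) : ∀ᶠ x in l, ∀ y ∈ K, F x y ≠ a := by
  refine hK.induction_on (p := fun t => ∀ᶠ x in l, ∀ y ∈ t, F x y ≠ a) (by simp)
    (fun t u htu hu => hu.mono fun x hx y hy => hx y (htu hy)) (fun t u ht hu => ?_) fun y hy => ?_
  · filter_upwards [ht, hu] with x hxt hxu y hy using hy.elim (hxt y) (hxu y)
  · obtain ⟨p, hp, q, hq, hpq⟩ :=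
      eventually_prod_iff.1 ((hF y hy).eventually_ne (hf y hy))
    exact ⟨{z | q z}, hq, hp.mono fun x hx z hz => hpq hx hz⟩

theorem eventually_exists_fiber_enumeration {ι : Type*} [Finite ι] (hK : IsCompact K)
    {V : ι → Set Y} (hF : ∀ y ∈ K, Tendsto ↿F (l ×ˢ 𝓝[K] y) (𝓝 (f y)))
    (hV : ∀ i, IsOpen (V i)) (hcover : ∀ y ∈ K, f y = a → ∃ i, y ∈ V i)
    (huniq : ∀ i, ∀ᶠ x in l, ∃! y, y ∈ V i ∧ F x y = a) :
    ∀ᶠ x in l, ∃ r : ι → Y, (∀ i, r i ∈ V i ∧ F x (r i) = a) ∧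
      ∀ y ∈ K, F x y = a → y ∈ range r := by
  have haway : ∀ᶠ x in l, ∀ y ∈ K \ ⋃ i, V i, F x y ≠ a :=
    eventually_forall_ne_of_isCompact (hK.diff (isOpen_iUnion hV))
      (fun y hy => (hF y hy.1).mono_left (prod_mono le_rfl (nhdsWithin_mono y sdiff_subset)))
      fun y hy hya => hy.2 (mem_iUnion.2 (hcover y hy.1 hya))
  filter_upwards [eventually_all.2 huniq, haway] with x hx hxK
  choose r hr hruniq using hx
  refine ⟨r, hr, fun y hy hya => ?_⟩
  obtain ⟨i, hi⟩ : ∃ i, y ∈ V i := by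
    by_contra hyV
    exact hxK y ⟨hy, fun hmem => hyV (mem_iUnion.1 hmem)⟩ hya
  exact ⟨i, (hruniq i y ⟨hi, hya⟩).symm⟩

end CompactFiber

section SimpleZeros

theorem mem_Ioo_of_mem_Icc_of_apply_ne {α R : Type*} [PartialOrder α] {f : α → R} {c d y : α}
    {a : R} (hc : f c ≠ a) (hd : f d ≠ a) (hy : y ∈ Icc c d) (hya : f y = a) : y ∈ Ioo c d := by
  rcases eq_endpoints_or_mem_Ioo_of_mem_Icc hy with rfl | rfl | hmem
  exacts [absurd hya hc, absurd hya hd, hmem]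

theorem finite_zeros_Ioo_of_hasDerivAt {f g : ℝ → ℝ} {c d : ℝ} (hcont : ContinuousOn f (Icc c d))
    (hf : ∀ y ∈ Ioo c d, HasDerivAt f (g y) y) (hc : f c ≠ 0) (hd : f d ≠ 0)
    (hsimple : ∀ y ∈ Ioo c d, f y = 0 → g y ≠ 0) : {y ∈ Ioo c d | f y = 0}.Finite := by
  refine (finite_fiber_of_eventually_ne isCompact_Icc hcont fun y hy hy₀ => ?_).subset
    fun y hy => ⟨Ioo_subset_Icc_self hy.1, hy.2⟩
  have hycd := mem_Ioo_of_mem_Icc_of_apply_ne hc hd hy hy₀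
  exact (hf y hycd).eventually_ne (hsimple y hycd hy₀)

theorem existsUnique_mem_Ioo_eq_of_strictMonoOn {α δ : Type*} [ConditionallyCompleteLinearOrder α]
    [TopologicalSpace α] [OrderTopology α] [DenselyOrdered α] [LinearOrder δ] [TopologicalSpace δ]
    [OrderClosedTopology δ] {f : α → δ} {a b : α} {t : δ} (hab : a ≤ b)
    (hmono : StrictMonoOn f (Icc a b)) (hcont : ContinuousOn f (Icc a b))
    (ht : t ∈ Ioo (f a) (f b)) : ∃! y, y ∈ Ioo a b ∧ f y = t := by
  obtain ⟨y, hy, hfy⟩ := intermediate_value_Ioo hab hcont ht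
  exact ⟨y, ⟨hy, hfy⟩, fun z ⟨hz, hfz⟩ =>
    hmono.injOn (Ioo_subset_Icc_self hz) (Ioo_subset_Icc_self hy) (hfz.trans hfy.symm)⟩

theorem eventually_nhdsGT_mem_Ioo_of_hasDerivAt_pos {f : ℝ → ℝ} {m y : ℝ} (hf : HasDerivAt f m y)
    (hm : 0 < m) : ∀ᶠ δ in 𝓝[>] (0 : ℝ), f y ∈ Ioo (f (y - δ)) (f (y + δ)) := by
  have hsign : ∀ᶠ z in 𝓝 y, SignType.sign (f z - f y) = SignType.sign (z - y) :=
    eventually_nhdsWithin_sign_eq_of_deriv_pos (f := fun z => f z - f y)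
      (by rwa [deriv_sub_const, hf.deriv]) (sub_self _)
  have hleft : Tendsto (fun δ => y - δ) (𝓝[>] 0) (𝓝 y) :=
    (Continuous.tendsto' (by fun_prop) 0 y (sub_zero y)).mono_left nhdsWithin_le_nhds
  have hright : Tendsto (fun δ => y + δ) (𝓝[>] 0) (𝓝 y) :=
    (Continuous.tendsto' (by fun_prop) 0 y (add_zero y)).mono_left nhdsWithin_le_nhds
  filter_upwards [hleft.eventually hsign, hright.eventually hsign, self_mem_nhdsWithin]
    with δ hl hr hδ
  rw [mem_Ioi] at hδ
  rw [sub_sub_cancel_left, sign_neg (neg_lt_zero.2 hδ), sign_eq_neg_one_iff, sub_neg] at hl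
  rw [add_sub_cancel_left, sign_pos hδ, sign_eq_one_iff, sub_pos] at hr
  exact ⟨hl, hr⟩

variable {X : Type*} {l : Filter X} {F G : X → ℝ → ℝ} {f : ℝ → ℝ}

theorem eventually_strictMonoOn_closedBall {y₀ m : ℝ} (hm : 0 < m)
    (hFG : ∀ᶠ p in l ×ˢ 𝓝 y₀, HasDerivAt (F p.1) (G p.1 p.2) p.2)
    (hG : Tendsto ↿G (l ×ˢ 𝓝 y₀) (𝓝 m)) :
    ∀ᶠ δ in 𝓝 (0 : ℝ), ∀ᶠ x in l,
      ContinuousOn (F x) (closedBall y₀ δ) ∧ StrictMonoOn (F x) (closedBall y₀ δ) := by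
  obtain ⟨p, hp, q, hq, hpq⟩ :=
    eventually_prod_iff.1 (hFG.and (hG.eventually (lt_mem_nhds hm)))
  filter_upwards [eventually_closedBall_subset hq] with δ hδ
  filter_upwards [hp] with x hx
  have hderiv : ∀ y ∈ closedBall y₀ δ, HasDerivAt (F x) (G x y) y ∧ 0 < G x y := fun y hy =>
    hpq hx (hδ hy)
  have hcont : ContinuousOn (F x) (closedBall y₀ δ) := fun y hy =>
    (hderiv y hy).1.continuousAt.continuousWithinAt
  exact ⟨hcont, strictMonoOn_of_hasDerivWithinAt_pos (convex_closedBall _ _) hcont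
    (fun y hy => (hderiv y (interior_subset hy)).1.hasDerivWithinAt)
    fun y hy => (hderiv y (interior_subset hy)).2⟩

theorem eventually_existsUnique_zero_of_pos {y₀ m : ℝ} (hm : 0 < m) (hf₀ : f y₀ = 0)
    (hf : HasDerivAt f m y₀) (hF : ∀ᶠ y in 𝓝 y₀, Tendsto (F · y) l (𝓝 (f y)))
    (hFG : ∀ᶠ p in l ×ˢ 𝓝 y₀, HasDerivAt (F p.1) (G p.1 p.2) p.2)
    (hG : Tendsto ↿G (l ×ˢ 𝓝 y₀) (𝓝 m)) :
    ∀ᶠ δ in 𝓝[>] (0 : ℝ), ∀ᶠ x in l, ∃! y, y ∈ ball y₀ δ ∧ F x y = 0 := by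
  filter_upwards [nhdsWithin_le_nhds (eventually_strictMonoOn_closedBall hm hFG hG),
    nhdsWithin_le_nhds (eventually_closedBall_subset hF),
    eventually_nhdsGT_mem_Ioo_of_hasDerivAt_pos hf hm, self_mem_nhdsWithin]
    with δ hmono hlim hsign hδ
  rw [mem_Ioi] at hδ
  rw [Real.closedBall_eq_Icc] at hmono hlim
  rw [hf₀] at hsign
  have hle : y₀ - δ ≤ y₀ + δ := by linarith
  filter_upwards [hmono, (hlim (left_mem_Icc.2 hle)).eventually (gt_mem_nhds hsign.1),
    (hlim (right_mem_Icc.2 hle)).eventually (lt_mem_nhds hsign.2)] with x ⟨hcont, hmono⟩ hlo hhi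
  rw [Real.ball_eq_Ioo]
  exact existsUnique_mem_Ioo_eq_of_strictMonoOn hle hmono hcont ⟨hlo, hhi⟩

theorem eventually_existsUnique_zero {y₀ m : ℝ} (hm : m ≠ 0) (hf₀ : f y₀ = 0)
    (hf : HasDerivAt f m y₀) (hF : ∀ᶠ y in 𝓝 y₀, Tendsto (F · y) l (𝓝 (f y)))
    (hFG : ∀ᶠ p in l ×ˢ 𝓝 y₀, HasDerivAt (F p.1) (G p.1 p.2) p.2)
    (hG : Tendsto ↿G (l ×ˢ 𝓝 y₀) (𝓝 m)) :
    ∀ᶠ δ in 𝓝[>] (0 : ℝ), ∀ᶠ x in l, ∃! y, y ∈ ball y₀ δ ∧ F x y = 0 := by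
  rcases hm.lt_or_gt with hneg | hpos
  · simpa using eventually_existsUnique_zero_of_pos (F := fun x y => -F x y)
      (G := fun x y => -G x y) (f := fun y => -f y) (neg_pos.2 hneg) (neg_eq_zero.2 hf₀) hf.fun_neg
      (hF.mono fun _ h => h.neg) (hFG.mono fun _ h => h.fun_neg) hG.neg
  · exact eventually_existsUnique_zero_of_pos hpos hf₀ hf hF hFG hG

theorem eventually_exists_isOrderedEnumeration_zeros {g : ℝ → ℝ} {c d : ℝ}
    (hf : ∀ y ∈ Ioo c d, HasDerivAt f (g y) y)
    (hF : ∀ y ∈ Icc c d, Tendsto ↿F (l ×ˢ 𝓝[Icc c d] y) (𝓝 (f y)))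
    (hFG : ∀ᶠ x in l, ∀ y ∈ Ioo c d, HasDerivAt (F x) (G x y) y)
    (hG : ∀ y ∈ Ioo c d, Tendsto ↿G (l ×ˢ 𝓝 y) (𝓝 (g y)))
    (hc : f c ≠ 0) (hd : f d ≠ 0) (hsimple : ∀ y ∈ Ioo c d, f y = 0 → g y ≠ 0) {k : ℕ}
    {r : Fin k → ℝ} (hr : IsOrderedEnumeration r {y ∈ Ioo c d | f y = 0}) {U : Set (Fin k → ℝ)}
    (hU : U ∈ 𝓝 r) :
    ∀ᶠ x in l, ∃ r' ∈ U, IsOrderedEnumeration r' {y ∈ Ioo c d | F x y = 0} := by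
  have hlim : ∀ y ∈ Ioo c d, ∀ᶠ z in 𝓝 y, Tendsto (F · z) l (𝓝 (f z)) := fun y hy => by
    filter_upwards [isOpen_Ioo.mem_nhds hy] with z hz
    exact (hF z (Ioo_subset_Icc_self hz)).comp (tendsto_id.prodMk
      (tendsto_const_nhdsWithin (Ioo_subset_Icc_self hz)))
  have huniq : ∀ᶠ δ in 𝓝[>] (0 : ℝ), ∀ i, ∀ᶠ x in l, ∃! y, y ∈ ball (r i) δ ∧ F x y = 0 :=
    eventually_all.2 fun i =>
      have ⟨hi, hi₀⟩ := hr.mem i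
      eventually_existsUnique_zero (hsimple _ hi hi₀) hi₀ (hf _ hi) (hlim _ hi)
        (by filter_upwards [hFG.prod_mk (isOpen_Ioo.mem_nhds hi)] with p hp using hp.1 _ hp.2)
        (hG _ hi)
  have hnear : {r' | r' ∈ U ∧ StrictMono r' ∧ ∀ i, r' i ∈ Ioo c d} ∈ 𝓝 r :=
    inter_mem hU ((eventually_strictMono hr.strictMono).and (eventually_all.2 fun i =>
      (continuousAt_apply i r).eventually (isOpen_Ioo.mem_nhds (hr.mem i).1)))
  obtain ⟨δ, hδuniq, hδnear, hδ⟩ := (huniq.and (Eventually.and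
    (nhdsWithin_le_nhds (eventually_ball_subset hnear)) self_mem_nhdsWithin)).exists
  have hcover : ∀ y ∈ Icc c d, f y = 0 → ∃ i, y ∈ ball (r i) δ := fun y hy hy₀ => by
    obtain ⟨i, rfl⟩ := hr.mem_iff.1 ⟨mem_Ioo_of_mem_Icc_of_apply_ne hc hd hy hy₀, hy₀⟩
    exact ⟨i, mem_ball_self hδ⟩
  filter_upwards [eventually_exists_fiber_enumeration isCompact_Icc hF (fun i => isOpen_ball)
    hcover hδuniq] with x ⟨r', hr', hzeros⟩
  obtain ⟨hr'U, hr'mono, hr'cd⟩ := hδnear ((dist_pi_lt_iff hδ).2 fun i => (hr' i).1)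
  exact ⟨r', hr'U, hr'mono, Subset.antisymm
    (range_subset_iff.2 fun i => ⟨hr'cd i, (hr' i).2⟩)
    fun y hy => hzeros y (Ioo_subset_Icc_self hy.1) hy.2⟩

end SimpleZeros

theorem delineable_in_segregating_box_general {X : Type*} [TopologicalSpace X] {s : Set X}
    (hs : IsPreconnected s) {F G : X → ℝ → ℝ} {c d : ℝ}
    (hF : ContinuousOn ↿F (s ×ˢ Icc c d)) (hG : ContinuousOn ↿G (s ×ˢ Ioo c d))
    (hFG : ∀ x ∈ s, ∀ y ∈ Ioo c d, HasDerivAt (F x) (G x y) y)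
    (hseg : ∀ x ∈ s, F x c ≠ 0 ∧ F x d ≠ 0)
    (hcrit : ∀ x ∈ s, ∀ y ∈ Ioo c d, ¬(F x y = 0 ∧ G x y = 0)) :
    ∃ (k : ℕ) (θ : Fin k → X → ℝ),
      (∀ i, ContinuousOn (θ i) s) ∧
      (∀ i, ∀ x ∈ s, θ i x ∈ Ioo c d) ∧
      (∀ x ∈ s, StrictMono fun i => θ i x) ∧
      (∀ x ∈ s, ∀ y ∈ Ioo c d, F x y = 0 ↔ ∃ i, y = θ i x) ∧
      (∀ i, ∀ x ∈ s, G x (θ i x) ≠ 0) := by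
  have hfin : ∀ x ∈ s, {y ∈ Ioo c d | F x y = 0}.Finite := fun x hx =>
    finite_zeros_Ioo_of_hasDerivAt (hF.uncurry_left x hx) (hFG x hx) (hseg x hx).1 (hseg x hx).2
      fun y hy h₀ h => hcrit x hx y hy ⟨h₀, h⟩
  obtain ⟨k, θ, hcont, hθ⟩ := exists_continuousOn_isOrderedEnumeration hs hfin
    fun x hx k r hr U hU => eventually_exists_isOrderedEnumeration_zeros (hFG x hx)
      (fun y hy => nhdsWithin_prod_eq x y s (Icc c d) ▸ hF (x, y) ⟨hx, hy⟩)
      (eventually_mem_nhdsWithin.mono hFG)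
      (fun y hy => isOpen_Ioo.nhdsWithin_eq hy ▸ nhdsWithin_prod_eq x y s (Ioo c d) ▸
        hG (x, y) ⟨hx, hy⟩)
      (hseg x hx).1 (hseg x hx).2 (fun y hy h₀ h => hcrit x hx y hy ⟨h₀, h⟩) hr hU
  exact ⟨k, fun i x => θ x i, continuousOn_pi.1 hcont, fun i x hx => ((hθ x hx).mem i).1,
    fun x hx => (hθ x hx).strictMono,
    fun x hx y hy => (and_iff_right hy).symm.trans (hθ x hx).mem_iff,
    fun i x hx h => hcrit x hx _ ((hθ x hx).mem i).1 ⟨((hθ x hx).mem i).2, h⟩⟩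

section PolynomialCurve

theorem hasDerivAt_eval_update {𝕜 σ : Type*} [NontriviallyNormedField 𝕜] [DecidableEq σ]
    (p : MvPolynomial σ 𝕜) (v : σ → 𝕜) (i : σ) :
    HasDerivAt (fun t => eval (Function.update v i t) p) (eval v (pderiv i p)) (v i) := by
  induction p using MvPolynomial.induction_on with
  | C r => simpa using hasDerivAt_const (v i) r
  | add p q hp hq => simpa using hp.fun_add hq
  | mul_X p j hp =>
    have hX := hasDerivAt_pi.1 (hasDerivAt_update v i (v i)) j
    simpa [pderiv_X, Pi.single_apply, apply_ite (eval v), eq_comm, add_comm, mul_comm]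
      using hp.fun_mul hX

theorem hasDerivAt_eval_pair {𝕜 : Type*} [NontriviallyNormedField 𝕜] (p : MvPolynomial (Fin 2) 𝕜)
    (x y : 𝕜) : HasDerivAt (fun t => eval ![x, t] p) (eval ![x, y] (pderiv 1 p)) y := by
  have hupdate (t : 𝕜) : Function.update ![x, y] 1 t = ![x, t] := by
    ext j
    fin_cases j <;> rfl
  simpa [hupdate] using hasDerivAt_eval_update p ![x, y] 1

theorem continuous_eval_pair {R : Type*} [CommSemiring R] [TopologicalSpace R]
    [IsTopologicalSemiring R] (p : MvPolynomial (Fin 2) R) :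
    Continuous fun z : R × R => eval ![z.1, z.2] p :=
  (MvPolynomial.continuous_eval p).comp (by fun_prop)

end PolynomialCurve

/-- Inside a segregating box `[a,b] × [c,d]` whose open interior contains
no x-critical point of the squarefree-type curve `g(x,y) = 0` (and such that the fibers
`g(x₀,·)` are not identically zero), the curve is a disjoint union of `k` ordered graphs of
continuous functions `θ₁ < ⋯ < θ_k : (a,b) → (c,d)`, and all the roots are simple. -/
theorem delineable_in_segregating_box
    (g : MvPolynomial (Fin 2) ℝ) (a b c d : ℝ) (hab : a < b) (hcd : c < d)
    (hfiber : ∀ x₀ ∈ Set.Icc a b, ∃ y : ℝ, eval ![x₀, y] g ≠ 0)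
    (hseg : ∀ x ∈ Set.Icc a b, eval ![x, c] g ≠ 0 ∧ eval ![x, d] g ≠ 0)
    (hcrit : ∀ x ∈ Set.Ioo a b, ∀ y ∈ Set.Ioo c d,
      ¬(eval ![x, y] g = 0 ∧ eval ![x, y] (pderiv 1 g) = 0)) :
    ∃ (k : ℕ) (θ : Fin k → ℝ → ℝ),
      (∀ i, ContinuousOn (θ i) (Set.Ioo a b)) ∧
      (∀ i, ∀ x ∈ Set.Ioo a b, θ i x ∈ Set.Ioo c d) ∧
      (∀ x ∈ Set.Ioo a b, StrictMono fun i => θ i x) ∧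
      (∀ x ∈ Set.Ioo a b, ∀ y ∈ Set.Ioo c d,
        (eval ![x, y] g = 0 ↔ ∃ i, y = θ i x)) ∧
      (∀ i, ∀ x ∈ Set.Ioo a b, eval ![x, θ i x] (pderiv 1 g) ≠ 0) := by
  exact delineable_in_segregating_box_general isPreconnected_Ioo
    (continuous_eval_pair g).continuousOn (continuous_eval_pair (pderiv 1 g)).continuousOn
    (fun x _ y _ => hasDerivAt_eval_pair g x y) (fun x hx => hseg x (Ioo_subset_Icc_self hx)) hcrit
end

section
/- Let g : ℝ² → ℝ be continuously differentiable and let P ∈ ℝ² with g(P) = 0. If the coordinate function (x,y) ↦ x, restricted to the set {(x,y) ∈ ℝ² : g(x,y) = 0}, attains a local maximum or a local minimum at P, then ∂g/∂y(P) = 0. -/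
/-!
At a local extremum of `φ` on a level set of `f`, the derivative of `(f, φ)` cannot be onto:
otherwise `(f, φ)` would be open there, and `φ` would take all values near the extremal one on that
level set. If `φ'` is onto, the obstruction must therefore come from `f'` restricted to `ker φ'`.
For a real-valued `f` this restriction vanishes, and when `φ` is the coordinate `x` it is `∂f/∂y`.
-/

variable {E F : Type*} [NormedAddCommGroup E] [NormedSpace ℝ E] [CompleteSpace E]
  [NormedAddCommGroup F] [NormedSpace ℝ F] [CompleteSpace F]

theorem map_ker_ne_top_of_isLocalExtrOn_level {f : E → F} {φ : E → ℝ} {x₀ : E}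
    {f' : E →L[ℝ] F} {φ' : StrongDual ℝ E} (hextr : IsLocalExtrOn φ {x | f x = f x₀} x₀)
    (hf : HasStrictFDerivAt f f' x₀) (hφ : HasStrictFDerivAt φ φ' x₀)
    (hφ' : Function.Surjective φ') : φ'.ker.map (f' : E →ₗ[ℝ] F) ≠ ⊤ := by
  intro hmap
  refine hextr.range_ne_top_of_hasStrictFDerivAt hf hφ (LinearMap.range_eq_top.2 ?_)
  rintro ⟨y, t⟩
  obtain ⟨u, hu⟩ := hφ' t
  obtain ⟨k, hk, hfk⟩ : y - f' u ∈ φ'.ker.map (f' : E →ₗ[ℝ] F) := hmap ▸ Submodule.mem_top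
  have hφk : φ' k = 0 := hk
  refine ⟨u + k, Prod.ext ?_ ?_⟩
  · calc f' (u + k) = f' u + f' k := map_add f' u k
      _ = f' u + (y - f' u) := congrArg (f' u + ·) hfk
      _ = y := add_sub_cancel _ _
  · calc φ' (u + k) = φ' u + φ' k := map_add φ' u k
      _ = t := by rw [hu, hφk, add_zero]

theorem ker_le_ker_of_isLocalExtrOn_level {f φ : E → ℝ} {x₀ : E} {f' φ' : StrongDual ℝ E}
    (hextr : IsLocalExtrOn φ {x | f x = f x₀} x₀) (hf : HasStrictFDerivAt f f' x₀)
    (hφ : HasStrictFDerivAt φ φ' x₀) (hφ' : Function.Surjective φ') : φ'.ker ≤ f'.ker := by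
  have hbot : φ'.ker.map (f' : E →ₗ[ℝ] ℝ) = ⊥ :=
    (eq_bot_or_eq_top _).resolve_right
      (map_ker_ne_top_of_isLocalExtrOn_level hextr hf hφ hφ')
  exact LinearMap.le_ker_iff_map.2 hbot

theorem x_extremal_is_x_critical_general {g : ℝ × E → ℝ} {g' : StrongDual ℝ (ℝ × E)}
    {P : ℝ × E} (hg : HasStrictFDerivAt g g' P)
    (hext : IsLocalExtrOn Prod.fst {p | g p = g P} P) (v : E) : g' (0, v) = 0 :=
  ker_le_ker_of_isLocalExtrOn_level hext hg hasStrictFDerivAt_fst Prod.fst_surjective rfl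

/-- If `g : ℝ² → ℝ` is `C¹`, `g(P) = 0` and the first coordinate function
restricted to the curve `{g = 0}` attains a local maximum or local minimum at `P`, then
`∂g/∂y (P) = 0`. -/
theorem x_extremal_is_x_critical
    (g : ℝ × ℝ → ℝ) (hg : ContDiff ℝ 1 g) (P : ℝ × ℝ) (hP : g P = 0)
    (hext : IsLocalMaxOn (fun p : ℝ × ℝ => p.1) {p : ℝ × ℝ | g p = 0} P ∨
            IsLocalMinOn (fun p : ℝ × ℝ => p.1) {p : ℝ × ℝ | g p = 0} P) :
    fderiv ℝ g P (0, 1) = 0 :=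
  x_extremal_is_x_critical_general (hg.contDiffAt.hasStrictFDerivAt one_ne_zero)
    (by rw [hP]; exact hext.symm) 1
end

section
/- Let f ∈ ℝ[x,y,z] and g ∈ ℝ[x,y] be polynomials, and define h = (∂f/∂x)(∂g/∂y) − (∂f/∂y)(∂g/∂x) ∈ ℝ[x,y,z]. Let P = (α,β,γ) ∈ ℝ³ satisfy f(P) = 0 and g(α,β) = 0, and suppose that the vectors ∇f(P) = (f_x(P), f_y(P), f_z(P)) and (g_x(α,β), g_y(α,β), 0) are linearly independent. If P is a z-extremal point of the space curve C = {(x,y,z) ∈ ℝ³ : f(x,y,z) = 0 and g(x,y) = 0}, then h(P) = 0. -/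
open MvPolynomial

/-!
The inverse function theorem, in the form of Lagrange's theorem, says that the derivatives of the
functions cutting out a level set and of a function with a local extremum on it are linearly
dependent. For the polynomials `f`, `g` and `z` in three variables, the determinant of these
derivatives is exactly `h`.
-/

theorem not_linearIndependent_of_isLocalExtrOn_levelSet {ι E : Type*} [Finite ι]
    [NormedAddCommGroup E] [NormedSpace ℝ E] [CompleteSpace E]
    {F : ι → E → ℝ} {F' : ι → StrongDual ℝ E} {x : E} {k : ι}
    (hextr : IsLocalExtrOn (F k) {y | ∀ i ≠ k, F i y = F i x} x)
    (hF : ∀ i, HasStrictFDerivAt (F i) (F' i) x) : ¬LinearIndependent ℝ F' := by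
  classical
  have hextr' : IsLocalExtrOn (F k) {y | ∀ i : {i // i ≠ k}, F i y = F i x} x := by
    simpa only [Subtype.forall] using hextr
  have hdep := hextr'.linear_dependent_of_hasStrictFDerivAt (fun i => hF i) (hF k)
  have hreindex : F' ∘ Equiv.optionSubtypeNe k =
      Option.elim' (F' k) (fun i : {i // i ≠ k} => F' i) := by
    ext1 (_ | _) <;> simp
  rwa [← hreindex, linearIndependent_equiv] at hdep

/-- The Jacobian matrix of a family of polynomials: the row of index `i` is the formal gradient of
`F i`. Its determinant, for as many polynomials as variables, detects dependent gradients. -/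
noncomputable def jacobianMatrix {R ι σ : Type*} [CommSemiring R] (F : ι → MvPolynomial σ R) :
    Matrix ι σ (MvPolynomial σ R) :=
  Matrix.of fun i j => pderiv j (F i)

theorem det_jacobianMatrix_X_two {R : Type*} [CommRing R] (f g : MvPolynomial (Fin 3) R) :
    (jacobianMatrix ![f, g, X 2]).det = pderiv 0 f * pderiv 1 g - pderiv 1 f * pderiv 0 g := by
  simp [jacobianMatrix, Matrix.det_fin_three, pderiv_X]

theorem hasStrictFDerivAt_eval_mvPolynomial {𝕜 σ : Type*} [NontriviallyNormedField 𝕜] [Fintype σ]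
    (p : MvPolynomial σ 𝕜) (x : σ → 𝕜) :
    HasStrictFDerivAt (fun y : σ → 𝕜 => eval y p)
      (∑ j, eval x (pderiv j p) • ContinuousLinearMap.proj (R := 𝕜) (φ := fun _ : σ => 𝕜) j) x := by
  classical
  induction p using MvPolynomial.induction_on with
  | C a =>
    simp only [eval_C]
    refine (hasStrictFDerivAt_const a x).congr_fderiv ?_
    ext v
    simp
  | add p q hp hq =>
    simp only [map_add]
    refine (hp.fun_add hq).congr_fderiv ?_
    ext v
    simp [add_mul, Finset.sum_add_distrib]
  | mul_X p k hp =>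
    simp only [map_mul, eval_X]
    refine (hp.fun_mul (hasStrictFDerivAt_apply k x)).congr_fderiv ?_
    ext v
    simp [pderiv_X, Pi.single_apply, add_mul, Finset.sum_add_distrib, Finset.mul_sum,
      apply_ite (eval x), mul_assoc]

theorem not_linearIndependent_jacobianMatrix_of_isLocalExtrOn {ι σ : Type*} [Finite ι] [Finite σ]
    {F : ι → MvPolynomial σ ℝ} {x : σ → ℝ} {k : ι}
    (hextr : IsLocalExtrOn (fun y => eval y (F k)) {y | ∀ i ≠ k, eval y (F i) = eval x (F i)} x) :
    ¬LinearIndependent ℝ ((jacobianMatrix F).map (eval x)).row := by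
  classical
  cases nonempty_fintype σ
  let coords : StrongDual ℝ (σ → ℝ) →ₗ[ℝ] σ → ℝ :=
    LinearMap.pi fun j => (ContinuousLinearMap.apply ℝ ℝ (Pi.single j 1)).toLinearMap
  intro hrows
  refine not_linearIndependent_of_isLocalExtrOn_levelSet (F := fun i y => eval y (F i)) hextr
    (fun i => hasStrictFDerivAt_eval_mvPolynomial (F i) x) (.of_comp coords ?_)
  convert hrows using 1
  ext i j
  simp [coords, jacobianMatrix, Pi.single_apply]

theorem eval_det_jacobianMatrix_eq_zero_of_isLocalExtrOn {σ : Type*} [Fintype σ] [DecidableEq σ]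
    {F : σ → MvPolynomial σ ℝ} {x : σ → ℝ} {k : σ}
    (hextr : IsLocalExtrOn (fun y => eval y (F k)) {y | ∀ i ≠ k, eval y (F i) = eval x (F i)} x) :
    eval x (jacobianMatrix F).det = 0 := by
  by_contra hdet
  rw [RingHom.map_det] at hdet
  exact not_linearIndependent_jacobianMatrix_of_isLocalExtrOn hextr
    (Matrix.linearIndependent_rows_of_det_ne_zero hdet)

theorem eval_rename_castSucc_fin_two {R : Type*} [CommSemiring R] (g : MvPolynomial (Fin 2) R)
    (p : Fin 3 → R) : eval p (rename Fin.castSucc g) = eval ![p 0, p 1] g := by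
  have hproj : p ∘ Fin.castSucc = ![p 0, p 1] := by
    ext i
    fin_cases i <;> rfl
  rw [eval_rename, hproj]

theorem z_extremal_of_space_curve_h_vanishes_general {f g : MvPolynomial (Fin 3) ℝ}
    {P : Fin 3 → ℝ} (hf : eval P f = 0) (hg : eval P g = 0)
    (hext : IsLocalExtrOn (fun p : Fin 3 → ℝ => p 2) {p | eval p f = 0 ∧ eval p g = 0} P) :
    eval P (pderiv 0 f * pderiv 1 g - pderiv 1 f * pderiv 0 g) = 0 := by
  rw [← det_jacobianMatrix_X_two]
  apply eval_det_jacobianMatrix_eq_zero_of_isLocalExtrOn (k := 2)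
  simpa [Fin.forall_fin_succ, hf, hg] using hext

/-- Let `h = f_x g_y - f_y g_x`.  If `P = (α,β,γ)` lies on the space curve
`f = 0, g = 0`, the gradients of `f` and of the cylinder `g` at `P` are linearly
independent, and `P` is a `z`-extremal point of the curve, then `h(P) = 0`. -/
theorem z_extremal_of_space_curve_h_vanishes
    (f : MvPolynomial (Fin 3) ℝ) (g : MvPolynomial (Fin 2) ℝ)
    (h : MvPolynomial (Fin 3) ℝ)
    (hh : h = pderiv 0 f * rename Fin.castSucc (pderiv 1 g)
            - pderiv 1 f * rename Fin.castSucc (pderiv 0 g))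
    (α β γ : ℝ)
    (hf : eval ![α, β, γ] f = 0) (hg : eval ![α, β] g = 0)
    (hind : LinearIndependent ℝ
      ![![eval ![α, β, γ] (pderiv 0 f), eval ![α, β, γ] (pderiv 1 f),
          eval ![α, β, γ] (pderiv 2 f)],
        ![eval ![α, β] (pderiv 0 g), eval ![α, β] (pderiv 1 g), 0]])
    (hext : IsLocalMaxOn (fun p : Fin 3 → ℝ => p 2)
              {p : Fin 3 → ℝ | eval p f = 0 ∧ eval ![p 0, p 1] g = 0} ![α, β, γ] ∨
            IsLocalMinOn (fun p : Fin 3 → ℝ => p 2)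
              {p : Fin 3 → ℝ | eval p f = 0 ∧ eval ![p 0, p 1] g = 0} ![α, β, γ]) :
    eval ![α, β, γ] h = 0 := by
  have hinj := Fin.castSucc_injective 2
  rw [hh, ← pderiv_rename hinj 1, ← pderiv_rename hinj 0]
  simp only [← eval_rename_castSucc_fin_two g] at hext
  exact z_extremal_of_space_curve_h_vanishes_general hf
    ((eval_rename_castSucc_fin_two g _).trans hg) hext.symm
end

section
/- Let a < b be real numbers, k ≥ 1 an integer, and let θ₁, …, θ_k and δ₁, …, δ_k be continuous functions from [a,b] to ℝ such that θᵢ(x) < θᵢ₊₁(x) and δᵢ(x) < δᵢ₊₁(x) for all x ∈ (a,b) and all 1 ≤ i < k, and such that θᵢ(a) = δᵢ(a) and θᵢ(b) = δᵢ(b) for all i. Then there exists a continuous map H : ℝ² × [0,1] → ℝ² such that: H(·, 0) is the identity of ℝ²; for each t ∈ [0,1], H(·, t) is a homeomorphism of ℝ² onto itself; H((x,y), t) = (x,y) for all t whenever x ∉ (a,b); and for each i, H(·, 1) maps the graph of δᵢ onto the graph of θᵢ (so H(·,1) maps the union of the graphs of the δᵢ onto the union of the graphs of the θᵢ). -/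
/-!
Over each `x`, interpolate the displacements `θ i x - δ i x` piecewise linearly between the nodes
`δ i x`. As the nodes keep their order, moving each point of the fibre by the interpolated
displacement is an increasing bijection of the line, and so is moving it by any fraction `t ≤ 1` of
the displacement, because `y + t * d y` is a convex combination of `y` and `y + d y`. Nodes may
collide over the frontier of the base region, where the slopes of the interpolation degenerate; the
isotopy stays continuous there because the weights of the pieces tend to `0` and the pieces are
bounded.
-/

open Set Filter Topology

section Interpolation

variable {𝕜 : Type*} [Field 𝕜] [LinearOrder 𝕜]

/-- The function rising linearly from `0` at `p` to `1` at `q` and constant outside `[p, q]`, the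
building block of piecewise linear interpolation. For `p = q` it is `0`, by the convention
`0 / 0 = 0`. -/
def ramp (p q y : 𝕜) : 𝕜 :=
  (max p (min q y) - p) / (q - p)

/-- Piecewise linear interpolation of the values `v i` at the nodes `u i`, extended by constants
beyond the first and the last node; the nodes are meant to be increasing. It is written as a sum of
ramps so that joint continuity in nodes, values and argument can be checked termwise. -/
def piecewiseLinearInterp {n : ℕ} (u v : Fin (n + 1) → 𝕜) (y : 𝕜) : 𝕜 :=
  v 0 + ∑ i : Fin n, (v i.succ - v i.castSucc) * ramp (u i.castSucc) (u i.succ) y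

theorem ramp_of_le {p y : 𝕜} (q : 𝕜) (h : y ≤ p) : ramp p q y = 0 := by
  simp [ramp, min_le_of_right_le h]

theorem piecewiseLinearInterp_eq_zero {n : ℕ} (u : Fin (n + 1) → 𝕜) {v : Fin (n + 1) → 𝕜}
    (hv : ∀ i, v i = 0) (y : 𝕜) : piecewiseLinearInterp u v y = 0 := by
  simp [piecewiseLinearInterp, hv]

theorem piecewiseLinearInterp_succ {n : ℕ} (u v : Fin (n + 2) → 𝕜) (y : 𝕜) :
    piecewiseLinearInterp u v y =
      piecewiseLinearInterp (u ∘ Fin.castSucc) (v ∘ Fin.castSucc) y +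
        (v (Fin.last (n + 1)) - v (Fin.last n).castSucc) *
          ramp (u (Fin.last n).castSucc) (u (Fin.last (n + 1))) y := by
  simp [piecewiseLinearInterp, Fin.sum_univ_castSucc, add_assoc]

theorem piecewiseLinearInterp_succ_of_le {n : ℕ} (u v : Fin (n + 2) → 𝕜) {y : 𝕜}
    (hy : y ≤ u (Fin.last n).castSucc) :
    piecewiseLinearInterp u v y =
      piecewiseLinearInterp (u ∘ Fin.castSucc) (v ∘ Fin.castSucc) y := by
  rw [piecewiseLinearInterp_succ, ramp_of_le _ hy, mul_zero, add_zero]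

variable [IsStrictOrderedRing 𝕜]

theorem ramp_of_ge {p q y : 𝕜} (hpq : p < q) (hy : q ≤ y) : ramp p q y = 1 := by
  rw [ramp, min_eq_left hy, max_eq_right hpq.le, div_self (sub_pos.2 hpq).ne']

theorem abs_ramp_le_one (p q y : 𝕜) : |ramp p q y| ≤ 1 := by
  rw [ramp, abs_div]
  refine div_le_one_of_le₀ ?_ (abs_nonneg _)
  grind

theorem ramp_monotone {p q : 𝕜} (hpq : p ≤ q) : Monotone (ramp p q) := fun y z hyz => by
  have : 0 ≤ q - p := sub_nonneg.2 hpq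
  unfold ramp
  gcongr

theorem mul_ramp_sub_ramp_le {p q y z : 𝕜} (hpq : p < q) (hyz : y ≤ z) :
    (q - p) * (ramp p q z - ramp p q y) ≤ z - y := by
  have hne : q - p ≠ 0 := (sub_pos.2 hpq).ne'
  rw [ramp, ramp, mul_sub, mul_div_cancel₀ _ hne, mul_div_cancel₀ _ hne]
  grind

theorem strictMono_add_mul_ramp {p q c : 𝕜} (hpq : p < q) (hc : p < q + c) :
    StrictMono fun y => y + c * ramp p q y := by
  intro y z hyz
  have hle := mul_ramp_sub_ramp_le hpq hyz.le
  rcases (ramp_monotone hpq.le hyz.le).eq_or_lt with heq | hlt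
  · simpa only [heq] using add_lt_add_left hyz _
  · have : 0 < (q + c - p) * (ramp p q z - ramp p q y) :=
      mul_pos (sub_pos.2 hc) (sub_pos.2 hlt)
    linarith

theorem abs_piecewiseLinearInterp_le {n : ℕ} (u v : Fin (n + 1) → 𝕜) (y : 𝕜) :
    |piecewiseLinearInterp u v y| ≤ |v 0| + ∑ i : Fin n, |v i.succ - v i.castSucc| := by
  refine (abs_add_le _ _).trans (add_le_add_right ?_ _)
  refine (Finset.abs_sum_le_sum_abs _ _).trans (Finset.sum_le_sum fun i _ => ?_)
  rw [abs_mul]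
  exact mul_le_of_le_one_right (abs_nonneg _) (abs_ramp_le_one _ _ _)

theorem piecewiseLinearInterp_of_last_le {n : ℕ} {u : Fin (n + 1) → 𝕜} (hu : StrictMono u)
    (v : Fin (n + 1) → 𝕜) {y : 𝕜} (hy : u (Fin.last n) ≤ y) :
    piecewiseLinearInterp u v y = v (Fin.last n) := by
  induction n with
  | zero => simp [piecewiseLinearInterp]
  | succ n ih =>
    have hlast : u (Fin.last n).castSucc < u (Fin.last (n + 1)) := hu (Fin.castSucc_lt_last _)
    rw [piecewiseLinearInterp_succ, ih (hu.comp Fin.strictMono_castSucc) _ (hlast.le.trans hy),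
      ramp_of_ge hlast hy, Function.comp_apply, mul_one, add_sub_cancel]

theorem piecewiseLinearInterp_node {n : ℕ} {u : Fin (n + 1) → 𝕜} (hu : StrictMono u)
    (v : Fin (n + 1) → 𝕜) (i : Fin (n + 1)) : piecewiseLinearInterp u v (u i) = v i := by
  induction n with
  | zero => simp [piecewiseLinearInterp, Fin.eq_zero i]
  | succ n ih =>
    cases i using Fin.lastCases with
    | last => exact piecewiseLinearInterp_of_last_le hu v le_rfl
    | cast i =>
      rw [piecewiseLinearInterp_succ_of_le u v
        (hu.monotone (Fin.castSucc_le_castSucc_iff.2 i.le_last))]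
      exact ih (hu.comp Fin.strictMono_castSucc) (v ∘ Fin.castSucc) i

theorem strictMono_add_piecewiseLinearInterp {n : ℕ} {u v : Fin (n + 1) → 𝕜} (hu : StrictMono u)
    (huv : StrictMono (u + v)) : StrictMono fun y => y + piecewiseLinearInterp u v y := by
  induction n with
  | zero => simpa [piecewiseLinearInterp] using strictMono_id.add_const (v 0)
  | succ n ih =>
    have hu' : StrictMono (u ∘ Fin.castSucc) := hu.comp Fin.strictMono_castSucc
    have hlast := Fin.castSucc_lt_last (Fin.last n)
    have hc : u (Fin.last n).castSucc <
        u (Fin.last (n + 1)) + (v (Fin.last (n + 1)) - v (Fin.last n).castSucc) := by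
      have := huv hlast
      simp only [Pi.add_apply] at this
      linarith
    refine StrictMonoOn.Iic_union_Ici (a := u (Fin.last n).castSucc) ?_ ?_
    · refine ((ih hu' (huv.comp Fin.strictMono_castSucc)).strictMonoOn _).congr fun y hy => ?_
      rw [piecewiseLinearInterp_succ_of_le u v hy]
      rfl
    · refine (((strictMono_add_mul_ramp (hu hlast) hc).add_const
        (v (Fin.last n).castSucc)).strictMonoOn _).congr fun y hy => ?_
      rw [piecewiseLinearInterp_succ, piecewiseLinearInterp_of_last_le hu' _ hy,
        Function.comp_apply]
      ring

variable [TopologicalSpace 𝕜] [OrderTopology 𝕜] {Z : Type*} [TopologicalSpace Z] {s : Set Z}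

theorem continuousOn_mul_ramp {c p q y : Z → 𝕜} (hc : ContinuousOn c s) (hp : ContinuousOn p s)
    (hq : ContinuousOn q s) (hy : ContinuousOn y s) (hpq : ∀ z ∈ s, p z = q z → c z = 0) :
    ContinuousOn (fun z => c z * ramp (p z) (q z) (y z)) s := by
  intro z hz
  by_cases heq : p z = q z
  · have hlim : Tendsto c (𝓝[s] z) (𝓝 0) := by
      simpa only [hpq z hz heq] using (hc z hz).tendsto
    simpa only [ContinuousWithinAt, hpq z hz heq, zero_mul, mul_comm (c _)] using
      bdd_le_mul_tendsto_zero' 1 (.of_forall fun w => abs_ramp_le_one (p w) (q w) (y w)) hlim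
  · have hnum := ((hp z hz).max ((hq z hz).min (hy z hz))).sub (hp z hz)
    exact (hc z hz).mul
      (hnum.div ((hq z hz).sub (hp z hz)) (sub_ne_zero.2 (Ne.symm heq)))

theorem continuousOn_piecewiseLinearInterp {n : ℕ} {u v : Fin (n + 1) → Z → 𝕜} {y : Z → 𝕜}
    (hu : ∀ i, ContinuousOn (u i) s) (hv : ∀ i, ContinuousOn (v i) s) (hy : ContinuousOn y s)
    (huv : ∀ z ∈ s, ∀ i : Fin n, u i.castSucc z = u i.succ z → v i.castSucc z = v i.succ z) :
    ContinuousOn (fun z => piecewiseLinearInterp (u · z) (v · z) (y z)) s :=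
  (hv 0).add <| continuousOn_finsetSum _ fun i _ =>
    continuousOn_mul_ramp ((hv _).sub (hv _)) (hu _) (hu _) hy fun z hz h =>
      sub_eq_zero.2 (huv z hz i h).symm

end Interpolation

section FiberwiseOrderIso

variable {X α β : Type*} [TopologicalSpace X]
  [LinearOrder α] [TopologicalSpace α] [OrderTopology α]
  [LinearOrder β] [TopologicalSpace β] [OrderClosedTopology β]

theorem continuous_fiberwise_symm {e : X → α ≃o β}
    (he : Continuous fun p : X × α => e p.1 p.2) :
    Continuous fun p : X × β => (e p.1).symm p.2 := by
  have hslice (y : α) : Continuous fun p : X × β => e p.1 y :=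
    he.comp (continuous_fst.prodMk continuous_const)
  refine continuous_iff_continuousAt.2 fun p => tendsto_order.2 ⟨fun l hl => ?_, fun r hr => ?_⟩
  · simp only [OrderIso.lt_symm_apply] at hl ⊢
    exact (isOpen_lt (hslice l) continuous_snd).mem_nhds hl
  · simp only [OrderIso.symm_apply_lt] at hr ⊢
    exact (isOpen_lt continuous_snd (hslice r)).mem_nhds hr

/-- The homeomorphism `(x, y) ↦ (x, e x y)` over `X` given by a jointly continuous family of order
isomorphisms of the fibres. -/
def fiberwiseHomeomorph (e : X → α ≃o β) (he : Continuous fun p : X × α => e p.1 p.2) :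
    X × α ≃ₜ X × β where
  toEquiv := (Equiv.refl X).prodShear fun x => (e x).toEquiv
  continuous_toFun := continuous_fst.prodMk he
  continuous_invFun := continuous_fst.prodMk (continuous_fiberwise_symm he)

end FiberwiseOrderIso

section VerticalShift

theorem surjective_add_of_abs_le {g : ℝ → ℝ} {C : ℝ} (hg : Continuous g)
    (hC : ∀ y, |g y| ≤ C) : Function.Surjective fun y => y + g y :=
  (continuous_id.add hg).surjective
    (tendsto_atTop_add_right_of_le _ (-C) tendsto_id fun y => (abs_le.1 (hC y)).1)
    (tendsto_atBot_add_right_of_ge _ C tendsto_id fun y => (abs_le.1 (hC y)).2)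

theorem strictMono_add_const_mul {g : ℝ → ℝ} (hg : StrictMono fun y => y + g y) {t : ℝ}
    (ht : t ∈ Icc 0 1) : StrictMono fun y => y + t * g y := by
  intro y z hyz
  have hconv : 0 < (1 - t) • (z - y) + t • (z + g z - (y + g y)) :=
    convex_Ioi 0 (sub_pos.2 hyz) (sub_pos.2 (hg hyz)) (sub_nonneg.2 ht.2) ht.1
      (sub_add_cancel 1 t)
  simp only [smul_eq_mul] at hconv
  linarith

variable {X : Type*}

/-- The isotopy moving each point of `X × ℝ` vertically by the fraction `t` of the displacement
prescribed by `D`. -/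
def verticalShift (D : X × ℝ → ℝ) (p : X × ℝ) (t : ℝ) : X × ℝ :=
  (p.1, p.2 + t * D p)

theorem verticalShift_one_image_graph {D : X × ℝ → ℝ} {S : Set X} {f g : X → ℝ}
    (hD : ∀ x ∈ S, D (x, f x) = g x - f x) :
    (verticalShift D · 1) '' {q | ∃ x ∈ S, q = (x, f x)} = {q | ∃ x ∈ S, q = (x, g x)} := by
  have hshift : ∀ x ∈ S, verticalShift D (x, f x) 1 = (x, g x) := fun x hx => by
    simp [verticalShift, hD x hx]
  ext q
  constructor
  · rintro ⟨_, ⟨x, hx, rfl⟩, rfl⟩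
    exact ⟨x, hx, hshift x hx⟩
  · rintro ⟨x, hx, rfl⟩
    exact ⟨_, ⟨x, hx, rfl⟩, hshift x hx⟩

variable [TopologicalSpace X]

theorem exists_homeomorph_verticalShift {D : X × ℝ → ℝ} (hD : Continuous D)
    (hmono : ∀ x, StrictMono fun y => y + D (x, y)) (hbdd : ∀ x, ∃ C, ∀ y, |D (x, y)| ≤ C)
    {t : ℝ} (ht : t ∈ Icc 0 1) :
    ∃ e : (X × ℝ) ≃ₜ (X × ℝ), ∀ p, e p = verticalShift D p t := by
  have hsurj (x : X) : Function.Surjective fun y => y + t * D (x, y) := by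
    obtain ⟨C, hC⟩ := hbdd x
    refine surjective_add_of_abs_le (C := |t| * C) (by fun_prop) fun y => ?_
    rw [abs_mul]
    exact mul_le_mul_of_nonneg_left (hC y) (abs_nonneg t)
  let e (x : X) : ℝ ≃o ℝ := (strictMono_add_const_mul (hmono x) ht).orderIsoOfSurjective _ (hsurj x)
  have he : Continuous fun p : X × ℝ => e p.1 p.2 :=
    continuous_snd.add (continuous_const.mul hD)
  exact ⟨fiberwiseHomeomorph e he, fun _ => rfl⟩

end VerticalShift

section BranchSystem

variable {X : Type*} {S : Set X} {n : ℕ} {θ δ : Fin (n + 1) → X → ℝ}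

/-- The vertical displacement carrying the branches `δ i` to the branches `θ i` over `S`: on the
fibre over `x ∈ S` it interpolates the values `θ i x - δ i x` at the nodes `δ i x`, and it vanishes
over the complement of `S`. -/
noncomputable def branchDisplacement (S : Set X) (θ δ : Fin (n + 1) → X → ℝ) : X × ℝ → ℝ :=
  (S ×ˢ univ).indicator fun z =>
    piecewiseLinearInterp (δ · z.1) (fun i => θ i z.1 - δ i z.1) z.2

theorem branchDisplacement_of_mem {x : X} (hx : x ∈ S) (y : ℝ) :
    branchDisplacement S θ δ (x, y) =
      piecewiseLinearInterp (δ · x) (fun i => θ i x - δ i x) y :=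
  indicator_of_mem (mk_mem_prod hx (mem_univ y)) _

theorem branchDisplacement_of_notMem {x : X} (hx : x ∉ S) (y : ℝ) :
    branchDisplacement S θ δ (x, y) = 0 :=
  indicator_of_notMem (fun h => hx h.1) _

theorem branchDisplacement_eq_zero {x : X} (h : x ∈ S → ∀ i, θ i x = δ i x) (y : ℝ) :
    branchDisplacement S θ δ (x, y) = 0 := by
  by_cases hx : x ∈ S
  · rw [branchDisplacement_of_mem hx]
    exact piecewiseLinearInterp_eq_zero _ (fun i => sub_eq_zero.2 (h hx i)) y
  · exact branchDisplacement_of_notMem hx y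

theorem exists_abs_branchDisplacement_le (x : X) :
    ∃ C, ∀ y, |branchDisplacement S θ δ (x, y)| ≤ C := by
  by_cases hx : x ∈ S
  · simp only [branchDisplacement_of_mem hx]
    exact ⟨_, abs_piecewiseLinearInterp_le _ _⟩
  · exact ⟨0, fun y => by rw [branchDisplacement_of_notMem hx, abs_zero]⟩

theorem strictMono_add_branchDisplacement {x : X} (hx : x ∈ S) (hθ : StrictMono (θ · x))
    (hδ : StrictMono (δ · x)) : StrictMono fun y => y + branchDisplacement S θ δ (x, y) := by
  simp only [branchDisplacement_of_mem hx]
  refine strictMono_add_piecewiseLinearInterp hδ ?_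
  simpa only [Pi.add_def, add_sub_cancel] using hθ

theorem branchDisplacement_branch {x : X} (hx : x ∈ S) (hδ : StrictMono (δ · x))
    (i : Fin (n + 1)) : branchDisplacement S θ δ (x, δ i x) = θ i x - δ i x := by
  rw [branchDisplacement_of_mem hx]
  exact piecewiseLinearInterp_node hδ _ i

variable [TopologicalSpace X]

theorem continuous_branchDisplacement (hS : IsClosed S) (hθ : ∀ i, ContinuousOn (θ i) S)
    (hδ : ∀ i, ContinuousOn (δ i) S) (hδlt : ∀ x ∈ interior S, StrictMono (δ · x))
    (heq : ∀ i, EqOn (θ i) (δ i) (frontier S)) : Continuous (branchDisplacement S θ δ) := by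
  have hzero : ∀ z ∈ frontier (S ×ˢ (univ : Set ℝ)), ∀ i, θ i z.1 - δ i z.1 = 0 := by
    rw [frontier_prod_univ_eq]
    exact fun z hz i => sub_eq_zero.2 (heq i hz.1)
  refine continuous_indicator (fun z hz => piecewiseLinearInterp_eq_zero _ (hzero z hz) _) ?_
  rw [(hS.prod isClosed_univ).closure_eq]
  have hcomp {f : X → ℝ} (hf : ContinuousOn f S) :
      ContinuousOn (fun z : X × ℝ => f z.1) (S ×ˢ univ) :=
    hf.comp continuousOn_fst fun z hz => hz.1
  refine continuousOn_piecewiseLinearInterp (fun i => hcomp (hδ i))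
    (fun i => (hcomp (hθ i)).sub (hcomp (hδ i))) continuousOn_snd fun z hz i hcollide => ?_
  have hfrontier : z.1 ∈ frontier S := by
    rw [hS.frontier_eq]
    exact ⟨hz.1, fun hint => (hδlt z.1 hint i.castSucc_lt_succ).ne hcollide⟩
  rw [sub_eq_zero.2 (heq _ hfrontier), sub_eq_zero.2 (heq _ hfrontier)]

theorem branch_system_ambient_isotopy_general (hS : IsClosed S)
    (hθc : ∀ i, ContinuousOn (θ i) S) (hδc : ∀ i, ContinuousOn (δ i) S)
    (hθlt : ∀ x ∈ interior S, StrictMono (θ · x)) (hδlt : ∀ x ∈ interior S, StrictMono (δ · x))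
    (heq : ∀ i, EqOn (θ i) (δ i) (frontier S)) :
    ∃ H : X × ℝ → ℝ → X × ℝ,
      Continuous (fun q : (X × ℝ) × ℝ => H q.1 q.2) ∧
      (∀ p, H p 0 = p) ∧
      (∀ t ∈ Icc (0 : ℝ) 1, ∃ e : (X × ℝ) ≃ₜ (X × ℝ), ∀ p, e p = H p t) ∧
      (∀ p t, p.1 ∉ interior S → H p t = p) ∧
      (∀ i, (H · 1) '' {q | ∃ x ∈ S, q = (x, δ i x)} = {q | ∃ x ∈ S, q = (x, θ i x)}) := by
  have heq' {x : X} (hx : x ∉ interior S) (hxS : x ∈ S) (i) : θ i x = δ i x :=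
    heq i (hS.frontier_eq ▸ ⟨hxS, hx⟩)
  have hzero {x : X} (hx : x ∉ interior S) (y) : branchDisplacement S θ δ (x, y) = 0 :=
    branchDisplacement_eq_zero (heq' hx) y
  have hcont := continuous_branchDisplacement hS hθc hδc hδlt heq
  have hmono (x : X) : StrictMono fun y => y + branchDisplacement S θ δ (x, y) := by
    by_cases hx : x ∈ interior S
    · exact strictMono_add_branchDisplacement (interior_subset hx) (hθlt x hx) (hδlt x hx)
    · simp only [hzero hx, add_zero]
      exact strictMono_id
  refine ⟨verticalShift (branchDisplacement S θ δ), ?_, fun p => by simp [verticalShift],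
    fun t ht => exists_homeomorph_verticalShift hcont hmono exists_abs_branchDisplacement_le ht,
    fun p t hp => by simp [verticalShift, hzero hp],
    fun i => verticalShift_one_image_graph fun x hx => ?_⟩
  · unfold verticalShift
    fun_prop
  · by_cases hint : x ∈ interior S
    · exact branchDisplacement_branch hx (hδlt x hint) i
    · rw [hzero hint, heq' hint hx, sub_self]

end BranchSystem

/-- Two families of `k` ordered continuous branches over `[a,b]` sharing
the same endpoints are ambient isotopic by an isotopy of `ℝ²` supported over `(a,b)`:
there is a continuous `H : ℝ² × [0,1] → ℝ²` with `H(·,0) = id`, each `H(·,t)` a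
homeomorphism, `H` the identity outside the strip `x ∈ (a,b)`, and `H(·,1)` carrying the
graph of each `δᵢ` onto the graph of the corresponding `θᵢ`. -/
theorem branch_system_ambient_isotopy
    (a b : ℝ) (hab : a < b) (k : ℕ) (hk : 1 ≤ k)
    (θ δ : Fin k → ℝ → ℝ)
    (hθc : ∀ i, ContinuousOn (θ i) (Set.Icc a b))
    (hδc : ∀ i, ContinuousOn (δ i) (Set.Icc a b))
    (hθlt : ∀ x ∈ Set.Ioo a b, ∀ i j : Fin k, i < j → θ i x < θ j x)
    (hδlt : ∀ x ∈ Set.Ioo a b, ∀ i j : Fin k, i < j → δ i x < δ j x)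
    (hea : ∀ i, θ i a = δ i a) (heb : ∀ i, θ i b = δ i b) :
    ∃ H : ℝ × ℝ → ℝ → ℝ × ℝ,
      ContinuousOn (fun q : (ℝ × ℝ) × ℝ => H q.1 q.2) (Set.univ ×ˢ Set.Icc 0 1) ∧
      (∀ p : ℝ × ℝ, H p 0 = p) ∧
      (∀ t ∈ Set.Icc (0 : ℝ) 1, ∃ e : (ℝ × ℝ) ≃ₜ (ℝ × ℝ), ∀ p, e p = H p t) ∧
      (∀ p : ℝ × ℝ, ∀ t ∈ Set.Icc (0 : ℝ) 1, p.1 ∉ Set.Ioo a b → H p t = p) ∧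
      (∀ i, (fun p => H p 1) '' {q : ℝ × ℝ | ∃ x ∈ Set.Icc a b, q = (x, δ i x)}
        = {q : ℝ × ℝ | ∃ x ∈ Set.Icc a b, q = (x, θ i x)}) := by
  obtain ⟨n, rfl⟩ := Nat.exists_eq_add_of_le' hk
  obtain ⟨H, hcont, hzero, hhomeo, hfix, himage⟩ :=
    branch_system_ambient_isotopy_general isClosed_Icc hθc hδc
      (fun x hx i j => hθlt x (interior_Icc.subset hx) i j)
      (fun x hx i j => hδlt x (interior_Icc.subset hx) i j)
      (fun i x hx => by rcases frontier_Icc hab.le ▸ hx with rfl | rfl; exacts [hea i, heb i])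
  exact ⟨H, hcont.continuousOn, hzero, hhomeo,
    fun p t _ hp => hfix p t (by rwa [interior_Icc]), himage⟩
end
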